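/- arXiv:2002.02478 — 3 statements merged into one kernel-verified Lean document; each statement's English description precedes it below -/
import Mathlib

section
/- Let c₁ > 0, 0 < κ ≤ 1, C ≥ 0, c₀ ∈ ℝ, c* > 0, β > 0, t ∈ ℝ, 0 < ε ≤ 1, λ ∈ ℝ, and set c₄ := 4κ⁻¹c₁²C and č := (1/2)·min{κc*, 2β}. Let Q and q₀ be real numbers. Assume ‖y‖ ≤ c₁‖x‖, ‖z‖² ≤ (κ²/(16c₁²))‖x‖² + C‖u‖², Q ≥ −(1−κ)‖x‖² − c₀‖u‖², λ·q₀ ≥ (c₀ + c₄ + β)‖u‖², and ‖x‖² ≥ c*·t²‖u‖². Then ‖x‖² + 2ε·Re⟨y, z⟩ + ε²Q + λε²q₀ ≥ č(t² + ε²)‖u‖². -/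
open scoped InnerProductSpace

/-- Let `c₁ > 0`, `0 < κ ≤ 1`, `C ≥ 0`, `c₀ ∈ ℝ`, `c* > 0`, `β > 0`, `t ∈ ℝ`,
`0 < ε ≤ 1`, `λ ∈ ℝ`, and set `c₄ := 4κ⁻¹c₁²C` and `ccheck := (1/2)·min{κc*, 2β}`. Let `Q` and `q₀`
be real numbers. Assume `‖y‖ ≤ c₁‖x‖`, `‖z‖² ≤ (κ²/(16c₁²))‖x‖² + C‖u‖²`,
`Q ≥ −(1−κ)‖x‖² − c₀‖u‖²`, `λ·q₀ ≥ (c₀ + c₄ + β)‖u‖²`, and `‖x‖² ≥ c*·t²‖u‖²`. Then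
`‖x‖² + 2ε·Re⟨y, z⟩ + ε²Q + λε²q₀ ≥ ccheck(t² + ε²)‖u‖²`. -/
theorem stmt_4
    {H H₁ H₂ : Type*}
    [NormedAddCommGroup H] [InnerProductSpace ℂ H]
    [NormedAddCommGroup H₁] [InnerProductSpace ℂ H₁]
    [NormedAddCommGroup H₂] [InnerProductSpace ℂ H₂]
    (u : H) (x : H₁) (y z : H₂)
    (c₁ κ C c₀ cstar β t ε lam Q q₀ c₄ ccheck : ℝ)
    (hc₁ : 0 < c₁) (hκ0 : 0 < κ) (hκ1 : κ ≤ 1) (hC : 0 ≤ C)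
    (hcstar : 0 < cstar) (hβ : 0 < β)
    (hε0 : 0 < ε) (hε1 : ε ≤ 1)
    (hc₄ : c₄ = 4 * κ⁻¹ * c₁ ^ 2 * C)
    (hccheck : ccheck = (1 / 2) * min (κ * cstar) (2 * β))
    (hy : ‖y‖ ≤ c₁ * ‖x‖)
    (hz : ‖z‖ ^ 2 ≤ κ ^ 2 / (16 * c₁ ^ 2) * ‖x‖ ^ 2 + C * ‖u‖ ^ 2)
    (hQ : -(1 - κ) * ‖x‖ ^ 2 - c₀ * ‖u‖ ^ 2 ≤ Q)
    (hq₀ : (c₀ + c₄ + β) * ‖u‖ ^ 2 ≤ lam * q₀)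
    (hx : cstar * t ^ 2 * ‖u‖ ^ 2 ≤ ‖x‖ ^ 2) :
    ccheck * (t ^ 2 + ε ^ 2) * ‖u‖ ^ 2
      ≤ ‖x‖ ^ 2 + 2 * ε * (⟪y, z⟫_ℂ).re + ε ^ 2 * Q + lam * ε ^ 2 * q₀ := by
  have hX : 0 ≤ ‖x‖ ^ 2 := sq_nonneg _
  have hU : 0 ≤ ‖u‖ ^ 2 := sq_nonneg _
  have hre : -(c₁ * ‖x‖ * ‖z‖) ≤ (⟪y, z⟫_ℂ).re := by
    have h1 : |(⟪y, z⟫_ℂ).re| ≤ ‖y‖ * ‖z‖ :=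
      (Complex.abs_re_le_norm _).trans (norm_inner_le_norm y z)
    have h2 : ‖y‖ * ‖z‖ ≤ c₁ * ‖x‖ * ‖z‖ := mul_le_mul_of_nonneg_right hy (norm_nonneg z)
    have h3 := neg_abs_le (⟪y, z⟫_ℂ).re
    linarith
  have hre2 : 2 * ε * -(c₁ * ‖x‖ * ‖z‖) ≤ 2 * ε * (⟪y, z⟫_ℂ).re :=
    mul_le_mul_of_nonneg_left hre (by positivity)
  have hyoung : 2 * ε * (c₁ * ‖x‖ * ‖z‖)
      ≤ κ / 4 * ‖x‖ ^ 2 + 4 * κ⁻¹ * c₁ ^ 2 * ε ^ 2 * ‖z‖ ^ 2 := by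
    have h : 0 ≤ κ⁻¹ * (κ / 2 * ‖x‖ - 2 * c₁ * ε * ‖z‖) ^ 2 := by positivity
    have e : κ⁻¹ * (κ / 2 * ‖x‖ - 2 * c₁ * ε * ‖z‖) ^ 2
        = κ / 4 * ‖x‖ ^ 2 + 4 * κ⁻¹ * c₁ ^ 2 * ε ^ 2 * ‖z‖ ^ 2
          - 2 * ε * (c₁ * ‖x‖ * ‖z‖) := by
      field_simp
      ring
    linarith
  have hz2 : 4 * κ⁻¹ * c₁ ^ 2 * ε ^ 2 * ‖z‖ ^ 2
      ≤ ε ^ 2 * (κ / 4 * ‖x‖ ^ 2 + c₄ * ‖u‖ ^ 2) := by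
    have h := mul_le_mul_of_nonneg_left hz
      (show 0 ≤ 4 * κ⁻¹ * c₁ ^ 2 * ε ^ 2 by positivity)
    refine h.trans (le_of_eq ?_)
    rw [hc₄]
    field_simp
    ring
  have hε2 : ε ^ 2 ≤ 1 := pow_le_one₀ hε0.le hε1
  have hQ2 := mul_le_mul_of_nonneg_left hQ (sq_nonneg ε)
  have hq2 := mul_le_mul_of_nonneg_left hq₀ (sq_nonneg ε)
  have hA : 0 ≤ (1 - ε ^ 2) * ((1 - κ + κ / 4) * ‖x‖ ^ 2) :=
    mul_nonneg (by linarith) (mul_nonneg (by linarith) hX)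
  have hx2 := mul_le_mul_of_nonneg_left hx (show 0 ≤ κ / 2 by positivity)
  have m1 : ccheck ≤ κ / 2 * cstar := by
    have := min_le_left (κ * cstar) (2 * β)
    linarith
  have m2 : ccheck ≤ β := by
    have := min_le_right (κ * cstar) (2 * β)
    linarith
  have n1 := mul_le_mul_of_nonneg_right m1 (mul_nonneg (sq_nonneg t) hU)
  have n2 := mul_le_mul_of_nonneg_right m2 (mul_nonneg (sq_nonneg ε) hU)
  linarith
end

section
/- Let X₀ be a closed densely defined linear operator from a complex Hilbert space H to a complex Hilbert space K, let 𝔑 := Ker X₀, and let D := {u ∈ Dom X₀ : u ⟂ 𝔑}. Assume there exists d⁰ > 0 such that ‖X₀φ‖² ≥ d⁰‖φ‖² for all φ ∈ D. Let X₁ : H → K be a bounded linear operator and ω ∈ 𝔑. Then there exists a unique φ ∈ D such that ⟨X₀φ, X₀ζ⟩ = −⟨X₁ω, X₀ζ⟩ for all ζ ∈ D, and this solution satisfies ‖X₀φ‖ ≤ ‖X₁ω‖. -/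
open scoped InnerProductSpace

/-- Let `X₀` be a closed densely defined linear operator from a complex Hilbert
space `H` to a complex Hilbert space `K`, let `𝔑 := Ker X₀`, and let
`D := {u ∈ Dom X₀ : u ⟂ 𝔑}`. Assume there exists `d⁰ > 0` such that `‖X₀φ‖² ≥ d⁰‖φ‖²` for all
`φ ∈ D`. Let `X₁ : H → K` be a bounded linear operator and `ω ∈ 𝔑`. Then there exists a unique
`φ ∈ D` such that `⟨X₀φ, X₀ζ⟩ = −⟨X₁ω, X₀ζ⟩` for all `ζ ∈ D`, and this solution satisfies
`‖X₀φ‖ ≤ ‖X₁ω‖`. -/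
theorem stmt_5
    {H K : Type*}
    [NormedAddCommGroup H] [InnerProductSpace ℂ H] [CompleteSpace H]
    [NormedAddCommGroup K] [InnerProductSpace ℂ K] [CompleteSpace K]
    (Dom : Submodule ℂ H) (X₀ : Dom →ₗ[ℂ] K)
    (hdense : Dense (Dom : Set H))
    (hclosed : IsClosed {p : H × K | ∃ u : Dom, (u : H) = p.1 ∧ X₀ u = p.2})
    (d₀ : ℝ) (hd₀ : 0 < d₀)
    (hlow : ∀ φ : Dom, (∀ w : Dom, X₀ w = 0 → ⟪(φ : H), (w : H)⟫_ℂ = 0) →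
      d₀ * ‖(φ : H)‖ ^ 2 ≤ ‖X₀ φ‖ ^ 2)
    (X₁ : H →L[ℂ] K) (ω : Dom) (hω : X₀ ω = 0) :
    (∃! φ : Dom,
      (∀ w : Dom, X₀ w = 0 → ⟪(φ : H), (w : H)⟫_ℂ = 0) ∧
      (∀ ζ : Dom, (∀ w : Dom, X₀ w = 0 → ⟪(ζ : H), (w : H)⟫_ℂ = 0) →
        ⟪X₀ φ, X₀ ζ⟫_ℂ = -⟪X₁ (ω : H), X₀ ζ⟫_ℂ)) ∧
    (∀ φ : Dom,
      (∀ w : Dom, X₀ w = 0 → ⟪(φ : H), (w : H)⟫_ℂ = 0) →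
      (∀ ζ : Dom, (∀ w : Dom, X₀ w = 0 → ⟪(ζ : H), (w : H)⟫_ℂ = 0) →
        ⟪X₀ φ, X₀ ζ⟫_ℂ = -⟪X₁ (ω : H), X₀ ζ⟫_ℂ) →
      ‖X₀ φ‖ ≤ ‖X₁ (ω : H)‖) := by
  classical
  let D : Submodule ℂ Dom :=
    { carrier := {φ | ∀ w : Dom, X₀ w = 0 → ⟪(φ : H), (w : H)⟫_ℂ = 0}
      zero_mem' := by intro w _; simp
      add_mem' := by
        intro a b ha hb w hw
        rw [Submodule.coe_add, inner_add_left, ha w hw, hb w hw, add_zero]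
      smul_mem' := by
        intro c a ha w hw
        rw [Submodule.coe_smul, inner_smul_left, ha w hw, mul_zero] }
  have hD : ∀ φ : Dom, φ ∈ D ↔ ∀ w : Dom, X₀ w = 0 → ⟪(φ : H), (w : H)⟫_ℂ = 0 :=
    fun φ => Iff.rfl
  simp only [← hD] at hlow ⊢
  have hRc : IsClosed ((D.map X₀ : Submodule ℂ K) : Set K) := by
    apply IsSeqClosed.isClosed
    intro y y0 hy hlim
    choose u hu huy using hy
    have hc : CauchySeq (fun n => ((u n : Dom) : H)) := by
      rw [Metric.cauchySeq_iff]
      intro ε hε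
      have hs : 0 < Real.sqrt d₀ := Real.sqrt_pos.mpr hd₀
      obtain ⟨N, hN⟩ := Metric.cauchySeq_iff.mp hlim.cauchySeq (Real.sqrt d₀ * ε) (by positivity)
      refine ⟨N, fun m hm n hn => ?_⟩
      have h1 := hN m hm n hn
      have h2 := hlow (u m - u n) (D.sub_mem (hu m) (hu n))
      rw [map_sub, huy, huy, Submodule.coe_sub, ← dist_eq_norm, ← dist_eq_norm] at h2
      have h3 : (Real.sqrt d₀ * dist (u m : H) (u n : H)) ^ 2 ≤ dist (y m) (y n) ^ 2 := by
        rw [mul_pow, Real.sq_sqrt hd₀.le]; exact h2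
      have h4 := le_of_sq_le_sq h3 dist_nonneg
      exact lt_of_mul_lt_mul_left (h4.trans_lt h1) hs.le
    obtain ⟨x, hx⟩ := cauchySeq_tendsto_of_complete hc
    have hmem := hclosed.mem_of_tendsto (hx.prodMk_nhds hlim)
      (Filter.Eventually.of_forall fun n => ⟨u n, rfl, huy n⟩)
    obtain ⟨v, hv1, hv2⟩ := hmem
    refine ⟨v, ?_, hv2⟩
    intro w hw
    have h5 : Filter.Tendsto (fun n => ⟪(u n : H), (w : H)⟫_ℂ) Filter.atTop
        (nhds ⟪x, (w : H)⟫_ℂ) := hx.inner tendsto_const_nhds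
    have h6 : (fun n => ⟪(u n : H), (w : H)⟫_ℂ) = fun _ => 0 := by
      funext n; exact hu n w hw
    rw [h6] at h5
    have h7 : (v : H) = x := hv1
    rw [h7]
    exact (tendsto_nhds_unique h5 tendsto_const_nhds)
  have : CompleteSpace (D.map X₀ : Submodule ℂ K) := hRc.completeSpace_coe
  refine ⟨?_, ?_⟩
  · obtain ⟨φ, hφ, hφp⟩ := ((D.map X₀).orthogonalProjection (-(X₁ (ω : H)))).2
    refine ⟨φ, ⟨hφ, ?_⟩, ?_⟩
    · intro ζ hζ
      have h := (D.map X₀).starProjection_inner_eq_zero (-(X₁ (ω : H))) (X₀ ζ) ⟨ζ, hζ, rfl⟩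
      rw [Submodule.starProjection_apply, ← hφp, inner_sub_left, inner_neg_left] at h
      exact (sub_eq_zero.mp h).symm
    · rintro ψ ⟨hψ, hψe⟩
      have hm := D.sub_mem hψ hφ
      have h := (D.map X₀).starProjection_inner_eq_zero (-(X₁ (ω : H))) (X₀ (ψ - φ)) ⟨_, hm, rfl⟩
      rw [Submodule.starProjection_apply, ← hφp, inner_sub_left, inner_neg_left, ← hψe _ hm,
        ← inner_sub_left, ← map_sub, inner_self_eq_zero] at h
      have h2 := hlow _ hm
      rw [h, norm_zero] at h2
      have h3 : ‖((ψ - φ : Dom) : H)‖ ^ 2 ≤ 0 := by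
        by_contra hh
        push Not at hh
        nlinarith [mul_pos hd₀ hh]
      have h4 : ‖((ψ - φ : Dom) : H)‖ = 0 := by
        exact pow_eq_zero_iff (two_ne_zero) |>.mp (le_antisymm h3 (sq_nonneg _))
      rw [norm_eq_zero, Submodule.coe_eq_zero] at h4
      exact sub_eq_zero.mp h4
  · intro φ hφ he
    have h := he φ hφ
    have h1 : ‖X₀ φ‖ * ‖X₀ φ‖ ≤ ‖X₁ (ω : H)‖ * ‖X₀ φ‖ := by
      calc ‖X₀ φ‖ * ‖X₀ φ‖ = ‖⟪X₀ φ, X₀ φ⟫_ℂ‖ := by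
            rw [inner_self_eq_norm_sq_to_K]; simp [pow_two]
        _ = ‖⟪X₁ (ω : H), X₀ φ⟫_ℂ‖ := by rw [h, norm_neg]
        _ ≤ _ := norm_inner_le_norm _ _
    rcases (norm_nonneg (X₀ φ)).eq_or_lt with h0 | h0
    · rw [← h0]; exact norm_nonneg _
    · exact le_of_mul_le_mul_right h1 h0
end

section
/- Let X₀ be a closed densely defined linear operator from a complex Hilbert space H to a complex Hilbert space K, let 𝔑 := Ker X₀, and let D := {u ∈ Dom X₀ : u ⟂ 𝔑}. Assume there exists d⁰ > 0 such that ‖X₀φ‖² ≥ d⁰‖φ‖² for all φ ∈ D. Let G be a complex Hilbert space, let Y₀ : Dom X₀ → G be a linear map satisfying ‖Y₀ζ‖ ≤ c₁‖X₀ζ‖ for all ζ ∈ Dom X₀ (with some c₁ > 0), and let w ∈ G. Then there exists a unique ψ ∈ D such that ⟨X₀ψ, X₀ζ⟩ = −⟨w, Y₀ζ⟩ for all ζ ∈ D, and this solution satisfies ‖X₀ψ‖ ≤ c₁‖w‖. -/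
open scoped InnerProductSpace

/-- Let `X₀` be a closed densely defined linear operator from a complex Hilbert
space `H` to a complex Hilbert space `K`, let `𝔑 := Ker X₀`, and let
`D := {u ∈ Dom X₀ : u ⟂ 𝔑}`. Assume there exists `d⁰ > 0` such that `‖X₀φ‖² ≥ d⁰‖φ‖²` for all
`φ ∈ D`. Let `G` be a complex Hilbert space, let `Y₀ : Dom X₀ → G` be a linear map satisfying
`‖Y₀ζ‖ ≤ c₁‖X₀ζ‖` for all `ζ ∈ Dom X₀` (with some `c₁ > 0`), and let `w ∈ G`. Then there
exists a unique `ψ ∈ D` such that `⟨X₀ψ, X₀ζ⟩ = −⟨w, Y₀ζ⟩` for all `ζ ∈ D`, and this solution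
satisfies `‖X₀ψ‖ ≤ c₁‖w‖`. -/
theorem stmt_6
    {H K G : Type*}
    [NormedAddCommGroup H] [InnerProductSpace ℂ H] [CompleteSpace H]
    [NormedAddCommGroup K] [InnerProductSpace ℂ K] [CompleteSpace K]
    [NormedAddCommGroup G] [InnerProductSpace ℂ G] [CompleteSpace G]
    (Dom : Submodule ℂ H) (X₀ : Dom →ₗ[ℂ] K)
    (hdense : Dense (Dom : Set H))
    (hclosed : IsClosed {p : H × K | ∃ u : Dom, (u : H) = p.1 ∧ X₀ u = p.2})
    (d₀ : ℝ) (hd₀ : 0 < d₀)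
    (hlow : ∀ φ : Dom, (∀ v : Dom, X₀ v = 0 → ⟪(φ : H), (v : H)⟫_ℂ = 0) →
      d₀ * ‖(φ : H)‖ ^ 2 ≤ ‖X₀ φ‖ ^ 2)
    (Y₀ : Dom →ₗ[ℂ] G) (c₁ : ℝ) (hc₁ : 0 < c₁)
    (hY₀ : ∀ ζ : Dom, ‖Y₀ ζ‖ ≤ c₁ * ‖X₀ ζ‖)
    (w : G) :
    (∃! ψ : Dom,
      (∀ v : Dom, X₀ v = 0 → ⟪(ψ : H), (v : H)⟫_ℂ = 0) ∧
      (∀ ζ : Dom, (∀ v : Dom, X₀ v = 0 → ⟪(ζ : H), (v : H)⟫_ℂ = 0) →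
        ⟪X₀ ψ, X₀ ζ⟫_ℂ = -⟪w, Y₀ ζ⟫_ℂ)) ∧
    (∀ ψ : Dom,
      (∀ v : Dom, X₀ v = 0 → ⟪(ψ : H), (v : H)⟫_ℂ = 0) →
      (∀ ζ : Dom, (∀ v : Dom, X₀ v = 0 → ⟪(ζ : H), (v : H)⟫_ℂ = 0) →
        ⟪X₀ ψ, X₀ ζ⟫_ℂ = -⟪w, Y₀ ζ⟫_ℂ) →
      ‖X₀ ψ‖ ≤ c₁ * ‖w‖) := by
  -- the subspace `D`
  let D : Submodule ℂ Dom :=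
    { carrier := {φ | ∀ v : Dom, X₀ v = 0 → ⟪(φ : H), (v : H)⟫_ℂ = 0}
      add_mem' := by
        intro a b ha hb v hv
        simp [inner_add_left, ha v hv, hb v hv]
      zero_mem' := by
        intro v hv
        simp
      smul_mem' := by
        intro c a ha v hv
        simp [inner_smul_left, ha v hv] }
  have hD : ∀ φ : Dom, φ ∈ D ↔ ∀ v : Dom, X₀ v = 0 → ⟪(φ : H), (v : H)⟫_ℂ = 0 :=
    fun φ => Iff.rfl
  simp only [← hD] at hlow ⊢
  have hs : 0 < Real.sqrt d₀ := Real.sqrt_pos.2 hd₀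
  have hlow' : ∀ φ ∈ D, ‖(φ : H)‖ ≤ (Real.sqrt d₀)⁻¹ * ‖X₀ φ‖ := by
    intro φ hφ
    rw [inv_mul_eq_div, le_div_iff₀ hs]
    refine (pow_le_pow_iff_left₀ (by positivity) (norm_nonneg _) two_ne_zero).1 ?_
    rw [mul_pow, Real.sq_sqrt hd₀.le, mul_comm]
    exact hlow φ hφ
  have hinj : ∀ φ ∈ D, X₀ φ = 0 → φ = 0 := by
    intro φ hφ h
    have := hlow' φ hφ
    rw [h, norm_zero, mul_zero] at this
    exact Subtype.ext (norm_le_zero_iff.1 this)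
  let L : D →ₗ[ℂ] K := X₀.domRestrict D
  have hLinj : Function.Injective L := by
    rw [injective_iff_map_eq_zero]
    intro a ha
    exact Subtype.ext (hinj a a.2 ha)
  -- the range of `X₀` on `D` is closed
  let S : Set (H × K) := {p | ∃ u : Dom, (u : H) = p.1 ∧ X₀ u = p.2} ∩
    {p | ∀ v : Dom, X₀ v = 0 → ⟪p.1, (v : H)⟫_ℂ = 0}
  have hS : IsClosed S := by
    refine hclosed.inter ?_
    simp only [Set.ofPred_forall]
    refine isClosed_iInter fun v => isClosed_iInter fun _ => ?_
    exact isClosed_eq (by fun_prop) continuous_const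
  have hScomp : CompleteSpace S := hS.completeSpace_coe
  let F : S → K := fun p => p.1.2
  have hFrange : Set.range F = (LinearMap.range L : Set K) := by
    ext k
    constructor
    · rintro ⟨⟨⟨x, y⟩, ⟨u, hu, hy⟩, ho⟩, rfl⟩
      simp only at hu hy ho
      subst hu
      exact ⟨⟨u, ho⟩, hy⟩
    · rintro ⟨u, rfl⟩
      exact ⟨⟨((u : Dom), L u), ⟨u, rfl, rfl⟩, u.2⟩, rfl⟩
  have hFanti : AntilipschitzWith (1 + (Real.sqrt d₀)⁻¹).toNNReal F := by
    apply AntilipschitzWith.of_le_mul_dist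
    rintro ⟨⟨x, y⟩, ⟨u, hu, hy⟩, ho⟩ ⟨⟨x', y'⟩, ⟨u', hu', hy'⟩, ho'⟩
    simp only at hu hy ho hu' hy' ho'
    subst hu hy hu' hy'
    have h1 := hlow' (u - u') (D.sub_mem ho ho')
    rw [Real.coe_toNNReal _ (by positivity)]
    have h2 : 0 ≤ (Real.sqrt d₀)⁻¹ * ‖X₀ u - X₀ u'‖ := by positivity
    have h3 := norm_nonneg (X₀ u - X₀ u')
    rw [map_sub] at h1
    change max (dist (u : H) u') (dist (X₀ u) (X₀ u')) ≤ _ * dist (X₀ u) (X₀ u')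
    rw [dist_eq_norm, dist_eq_norm]
    apply max_le
    · have h4 : ‖(u : H) - u'‖ ≤ _ := h1
      linarith
    · linarith
  have hFunif : UniformContinuous F := uniformContinuous_snd.comp uniformContinuous_subtype_val
  have hclR : IsClosed (LinearMap.range L : Set K) := by
    rw [← hFrange]
    exact hFanti.isClosed_range hFunif
  have hRcomp : CompleteSpace (LinearMap.range L) := hclR.completeSpace_coe
  let e : D ≃ₗ[ℂ] LinearMap.range L := LinearEquiv.ofInjective L hLinj
  let f₀ : LinearMap.range L →ₗ[ℂ] ℂ :=
    -((innerSL ℂ w).toLinearMap ∘ₗ Y₀ ∘ₗ D.subtype ∘ₗ e.symm.toLinearMap)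
  have hf₀ : ∀ ζ : D, f₀ (e ζ) = -⟪w, Y₀ ζ⟫_ℂ := by
    intro ζ
    simp [f₀]
  have hf₀b : ∀ x, ‖f₀ x‖ ≤ (c₁ * ‖w‖) * ‖x‖ := by
    intro x
    obtain ⟨ζ, rfl⟩ := e.surjective x
    rw [hf₀, norm_neg]
    calc ‖⟪w, Y₀ ζ⟫_ℂ‖ ≤ ‖w‖ * ‖Y₀ ζ‖ := norm_inner_le_norm _ _
      _ ≤ ‖w‖ * (c₁ * ‖X₀ ζ‖) := by gcongr; exact hY₀ _
      _ = (c₁ * ‖w‖) * ‖X₀ ζ‖ := by ring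
  let f : LinearMap.range L →L[ℂ] ℂ := f₀.mkContinuous _ hf₀b
  obtain ⟨ψ, hψ⟩ := e.surjective ((InnerProductSpace.toDual ℂ (LinearMap.range L)).symm f)
  refine ⟨⟨ψ, ⟨ψ.2, ?_⟩, ?_⟩, ?_⟩
  · intro ζ hζ
    rw [← hf₀ ⟨ζ, hζ⟩]
    have h := InnerProductSpace.toDual_symm_apply (𝕜 := ℂ) (x := e ⟨ζ, hζ⟩) (y := f)
    rw [← hψ] at h
    exact h
  · rintro φ ⟨hφ, hφ'⟩
    have h0 : ∀ ζ : Dom, ζ ∈ D → ⟪X₀ ψ, X₀ ζ⟫_ℂ = -⟪w, Y₀ ζ⟫_ℂ := by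
      intro ζ hζ
      rw [← hf₀ ⟨ζ, hζ⟩]
      have h := InnerProductSpace.toDual_symm_apply (𝕜 := ℂ) (x := e ⟨ζ, hζ⟩) (y := f)
      rw [← hψ] at h
      exact h
    have hm : φ - ψ ∈ D := D.sub_mem hφ ψ.2
    refine sub_eq_zero.1 (hinj _ hm ?_)
    rw [← inner_self_eq_zero (𝕜 := ℂ)]
    nth_rewrite 1 [map_sub]
    rw [inner_sub_left, hφ' _ hm, h0 _ hm, sub_self]
  · intro φ hφ h
    have h1 : ‖X₀ φ‖ * ‖X₀ φ‖ ≤ (c₁ * ‖w‖) * ‖X₀ φ‖ := by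
      rw [← inner_self_eq_norm_mul_norm (𝕜 := ℂ), h φ hφ]
      calc RCLike.re (-⟪w, Y₀ φ⟫_ℂ) ≤ ‖-⟪w, Y₀ φ⟫_ℂ‖ := RCLike.re_le_norm _
        _ = ‖⟪w, Y₀ φ⟫_ℂ‖ := norm_neg _
        _ ≤ ‖w‖ * ‖Y₀ φ‖ := norm_inner_le_norm _ _
        _ ≤ ‖w‖ * (c₁ * ‖X₀ φ‖) := by gcongr; exact hY₀ _
        _ = (c₁ * ‖w‖) * ‖X₀ φ‖ := by ring
    rcases (norm_nonneg (X₀ φ)).eq_or_lt with h2 | h2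
    · rw [← h2]
      positivity
    · exact le_of_mul_le_mul_right h1 h2
end
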